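/- arXiv:1307.4682 — 2 statements merged into one kernel-verified Lean document; each statement's English description precedes it below -/
import Mathlib

section
/- For a V-functor f: A → B between V-categories over a commutative quantale V, the following are equivalent: (1) f is fully faithful; (2) the unit of the adjunction f_⋄ ⊣ f^⋄ is an isomorphism, i.e. ⋁_b B(f a, b) ⊗ B(b, f a') = A(a,a') for all objects a,a' of A. Moreover, these conditions imply that f is representably fully faithful: for every V-category X and all V-functors h,k: X → A, one has ⋀_x A(h x, k x) = ⋀_x B(f(h x), f(k x)). -/
universe u v w

/-- A category enriched in a commutative quantale `V`:
objects together with `V`-valued homs satisfying the identity and composition axioms. -/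
structure VCategory (V : Type u) [CompleteLattice V] [CommMonoid V] where
  Obj : Type v
  hom : Obj → Obj → V
  one_le_hom : ∀ a, (1 : V) ≤ hom a a
  comp_le : ∀ a b c, hom b c * hom a b ≤ hom a c

/-- A `V`-functor is an object assignment which is (hom-)expanding. -/
def IsVFunctor {V : Type u} [CompleteLattice V] [CommMonoid V]
    (A : VCategory.{u, v} V) (B : VCategory.{u, w} V) (f : A.Obj → B.Obj) : Prop :=
  ∀ a a', A.hom a a' ≤ B.hom (f a) (f a')

/-- A module `R : A ⇸ B`. -/
def IsModule {V : Type u} [CompleteLattice V] [CommMonoid V]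
    (A : VCategory.{u, v} V) (B : VCategory.{u, w} V) (R : B.Obj → A.Obj → V) : Prop :=
  ∀ (a a' : A.Obj) (b b' : B.Obj), B.hom b' b * R b a * A.hom a a' ≤ R b' a'

/-- The internal hom of the quantale: `[x,y] = ⋁ {z | x ⊗ z ≤ y}`. -/
def ihom {V : Type u} [CompleteLattice V] [CommMonoid V] (x y : V) : V :=
  sSup {z | x * z ≤ y}

/-- A presheaf on `A`. -/
def IsPresheaf {V : Type u} [CompleteLattice V] [CommMonoid V]
    (A : VCategory.{u, v} V) (F : A.Obj → V) : Prop :=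
  ∀ a a', F a * A.hom a' a ≤ F a'

/-!
The composite module `f^⋄ ∘ f_⋄` sends `(a, a')` to `⋁_b B(f a, b) ⊗ B(b, f a')`. By the
composition law of `B` every term is at most `B(f a, f a')`, and by the identity law the term
`b = f a'` reaches this bound. Hence the unit of `f_⋄ ⊣ f^⋄` compares `A(a, a')` with
`B(f a, f a')`.
-/

theorem isQuantale_of_mul_sSup {S : Type*} [CommSemigroup S] [CompleteLattice S]
    (h : ∀ (x : S) (s : Set S), x * sSup s = ⨆ y ∈ s, x * y) : IsQuantale S where
  mul_sSup_distrib := h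
  sSup_mul_distrib s x := by simpa only [mul_comm] using h x s

namespace VCategory

variable {V : Type u} [CompleteLattice V] [CommMonoid V]

theorem hom_mul_hom_le (B : VCategory.{u, v} V) (x y z : B.Obj) :
    B.hom x y * B.hom y z ≤ B.hom x z :=
  (mul_comm _ _).trans_le (B.comp_le x y z)

theorem iSup_hom_mul_hom [MulLeftMono V] (B : VCategory.{u, v} V) (x z : B.Obj) :
    ⨆ y, B.hom x y * B.hom y z = B.hom x z :=
  le_antisymm (iSup_le fun y => B.hom_mul_hom_le x y z)
    (le_iSup_of_le z (le_mul_of_one_le_right' (B.one_le_hom z)))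

end VCategory

theorem fullyFaithful_iff_unit_iso_general {V : Type u} [CompleteLattice V] [CommMonoid V]
    [MulLeftMono V] (A : VCategory.{u, v} V) (B : VCategory.{u, w} V) (f : A.Obj → B.Obj) :
    ((∀ a a', A.hom a a' = B.hom (f a) (f a')) ↔
      ∀ a a', ⨆ b, B.hom (f a) b * B.hom b (f a') = A.hom a a') ∧
    ((∀ a a', A.hom a a' = B.hom (f a) (f a')) →
      ∀ {ι : Sort*} (h k : ι → A.Obj),
        ⨅ i, A.hom (h i) (k i) = ⨅ i, B.hom (f (h i)) (f (k i))) := by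
  constructor
  · simp only [B.iSup_hom_mul_hom]
    exact forall₂_congr fun _ _ => eq_comm
  · exact fun hff _ h k => iInf_congr fun i => hff (h i) (k i)

/-- `f` is fully faithful iff the unit of the graph adjunction is an isomorphism; moreover
these conditions imply that `f` is representably fully faithful. -/
theorem fullyFaithful_iff_unit_iso {V : Type u} [CompleteLattice V] [CommMonoid V]
    (hV : ∀ (x : V) (s : Set V), x * sSup s = ⨆ y ∈ s, x * y)
    (A B : VCategory.{u, v} V)
    (f : A.Obj → B.Obj) (hf : IsVFunctor A B f) :
    ((∀ a a', A.hom a a' = B.hom (f a) (f a')) ↔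
      (∀ a a' : A.Obj, (⨆ b, B.hom (f a) b * B.hom b (f a')) = A.hom a a')) ∧
    ((∀ a a', A.hom a a' = B.hom (f a) (f a')) →
      ∀ (X : VCategory.{u, w} V) (h k : X.Obj → A.Obj),
        IsVFunctor X A h → IsVFunctor X A k →
          (⨅ x, A.hom (h x) (k x)) = ⨅ x, B.hom (f (h x)) (f (k x))) := by
  have := isQuantale_of_mul_sSup hV
  exact (fullyFaithful_iff_unit_iso_general A B f).imp_right fun H hff _ h k _ _ => H hff h k
end

section
/- Let j: A → B, h: A → X, l: B → X be V-functors between V-categories over a commutative quantale V such that X(x, l b) = ⋁_a X(x, h a) ⊗ B(j a, b) for all objects x of X and b of B. Then (i) l is a left Kan extension of h along j: for every V-functor k: B → X, one has I ≤ ⋀_b X(l b, k b) if and only if I ≤ ⋀_a X(h a, k(j a)); and (ii) this Kan extension is absolute: for every V-functor f: X → X' and every V-functor k: B → X', one has I ≤ ⋀_b X'(f(l b), k b) if and only if I ≤ ⋀_a X'(f(h a), k(j a)). -/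
universe u v w

/-! The exactness formula at `x = h a` and at `x = l b` yields a unit inequality
`I ≤ X(h a, l (j a))` and a density inequality `I ≤ ⋁ a, X(l b, h a) ⊗ B(j a, b)`. Both involve only
lower bounds on homs of `X`, so every `V`-functor out of `X` preserves them: this is absoluteness.
Composing with the unit gives `⋀ b, X(l b, k b) ≤ ⋀ a, X(h a, k (j a))`, and tensoring with the
density inequality gives the converse. The universal property is thus an equality in `V`. -/

theorem isQuantale_of_mul_sSup_distrib {V : Type*} [CompleteLattice V] [CommSemigroup V]
    (hV : ∀ (x : V) (s : Set V), x * sSup s = ⨆ y ∈ s, x * y) : IsQuantale V where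
  mul_sSup_distrib := hV
  sSup_mul_distrib s x := by simp only [mul_comm _ x, hV]

namespace VCategory

variable {V : Type u} [CompleteLattice V] [CommMonoid V] [MulLeftMono V]

theorem hom_le_hom_of_one_le (X : VCategory V) {x y : X.Obj} (hxy : 1 ≤ X.hom x y) (z : X.Obj) :
    X.hom y z ≤ X.hom x z :=
  (le_mul_of_one_le_right' hxy).trans (X.comp_le x y z)

theorem hom_mul_hom_mul_hom_le (X : VCategory V) (w x y z : X.Obj) :
    X.hom y z * X.hom x y * X.hom w x ≤ X.hom w z :=
  (mul_le_mul_left (X.comp_le x y z) _).trans (X.comp_le w x z)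

end VCategory

/-- `l` is an absolute left Kan extension of `h` along `j`, expressed by the two inequalities from
which its universal property follows. Only the values of `h` and `j` on objects enter, so they are
families indexed by a type `ι`, to be taken as the objects of the domain. -/
structure IsAbsoluteLeftKan {V : Type u} [CompleteLattice V] [CommMonoid V] {ι : Type*}
    (B X : VCategory V) (j : ι → B.Obj) (h : ι → X.Obj) (l : B.Obj → X.Obj) : Prop where
  one_le_hom_unit : ∀ a, 1 ≤ X.hom (h a) (l (j a))
  one_le_iSup : ∀ b, 1 ≤ ⨆ a, X.hom (l b) (h a) * B.hom (j a) b

namespace IsAbsoluteLeftKan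

variable {V : Type u} [CompleteLattice V] [CommMonoid V] {ι : Type*}
  {B X X' : VCategory V} {j : ι → B.Obj} {h : ι → X.Obj} {l : B.Obj → X.Obj}

theorem of_hom_eq_iSup [MulLeftMono V]
    (hform : ∀ x b, X.hom x (l b) = ⨆ a, X.hom x (h a) * B.hom (j a) b) :
    IsAbsoluteLeftKan B X j h l where
  one_le_hom_unit a := calc
    1 ≤ X.hom (h a) (h a) * B.hom (j a) (j a) :=
      one_le_mul (X.one_le_hom (h a)) (B.one_le_hom (j a))
    _ ≤ ⨆ a', X.hom (h a) (h a') * B.hom (j a') (j a) :=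
      le_iSup (fun a' ↦ X.hom (h a) (h a') * B.hom (j a') (j a)) a
    _ = X.hom (h a) (l (j a)) := (hform _ _).symm
  one_le_iSup b := (X.one_le_hom (l b)).trans_eq (hform _ _)

theorem map [MulLeftMono V] (hl : IsAbsoluteLeftKan B X j h l) {F : X.Obj → X'.Obj}
    (hF : IsVFunctor X X' F) : IsAbsoluteLeftKan B X' j (F ∘ h) (F ∘ l) where
  one_le_hom_unit a := (hl.one_le_hom_unit a).trans (hF _ _)
  one_le_iSup b := (hl.one_le_iSup b).trans (iSup_mono fun _ ↦ mul_le_mul_left (hF _ _) _)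

theorem iInf_hom_le [MulLeftMono V] (hl : IsAbsoluteLeftKan B X j h l) (k : B.Obj → X.Obj) :
    ⨅ b, X.hom (l b) (k b) ≤ ⨅ a, X.hom (h a) (k (j a)) :=
  le_iInf fun a ↦ (iInf_le _ (j a)).trans (X.hom_le_hom_of_one_le (hl.one_le_hom_unit a) _)

theorem le_iInf_hom [IsQuantale V] (hl : IsAbsoluteLeftKan B X j h l) {k : B.Obj → X.Obj}
    (hk : IsVFunctor B X k) :
    ⨅ a, X.hom (h a) (k (j a)) ≤ ⨅ b, X.hom (l b) (k b) := by
  refine le_iInf fun b ↦ ?_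
  set z := ⨅ a, X.hom (h a) (k (j a))
  have hz (a : ι) : z * (X.hom (l b) (h a) * B.hom (j a) b) ≤ X.hom (l b) (k b) := calc
    _ ≤ X.hom (h a) (k (j a)) * (X.hom (l b) (h a) * X.hom (k (j a)) (k b)) :=
      mul_le_mul' (iInf_le _ a) (mul_le_mul_right (hk _ _) _)
    _ = X.hom (k (j a)) (k b) * X.hom (h a) (k (j a)) * X.hom (l b) (h a) := by ac_rfl
    _ ≤ X.hom (l b) (k b) := X.hom_mul_hom_mul_hom_le _ _ _ _
  calc
    z ≤ z * ⨆ a, X.hom (l b) (h a) * B.hom (j a) b := le_mul_of_one_le_right' (hl.one_le_iSup b)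
    _ = ⨆ a, z * (X.hom (l b) (h a) * B.hom (j a) b) := Quantale.mul_iSup_distrib
    _ ≤ X.hom (l b) (k b) := iSup_le hz

theorem iInf_hom_eq [IsQuantale V] (hl : IsAbsoluteLeftKan B X j h l) {k : B.Obj → X.Obj}
    (hk : IsVFunctor B X k) :
    ⨅ b, X.hom (l b) (k b) = ⨅ a, X.hom (h a) (k (j a)) :=
  (hl.iInf_hom_le k).antisymm (hl.le_iInf_hom hk)

end IsAbsoluteLeftKan

theorem absolute_left_kan_extension_general {V : Type u} [CompleteLattice V] [CommMonoid V]
    [IsQuantale V] {ι : Type*} {B X X' : VCategory V}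
    {j : ι → B.Obj} {h : ι → X.Obj} {l : B.Obj → X.Obj}
    (hform : ∀ x b, X.hom x (l b) = ⨆ a, X.hom x (h a) * B.hom (j a) b)
    {F : X.Obj → X'.Obj} (hF : IsVFunctor X X' F) {k : B.Obj → X'.Obj} (hk : IsVFunctor B X' k) :
    ⨅ b, X'.hom (F (l b)) (k b) = ⨅ a, X'.hom (F (h a)) (k (j a)) :=
  ((IsAbsoluteLeftKan.of_hom_eq_iSup hform).map hF).iInf_hom_eq hk

/-- If the exactness formula for an absolute left Kan extension holds, then `l` is a left
Kan extension of `h` along `j`, and this Kan extension is absolute. -/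
theorem absolute_left_kan_extension {V : Type u} [CompleteLattice V] [CommMonoid V]
    (hV : ∀ (x : V) (s : Set V), x * sSup s = ⨆ y ∈ s, x * y)
    (A B X : VCategory.{u, v} V)
    (j : A.Obj → B.Obj) (h : A.Obj → X.Obj) (l : B.Obj → X.Obj)
    (hj : IsVFunctor A B j) (hh : IsVFunctor A X h) (hl : IsVFunctor B X l)
    (hform : ∀ (x : X.Obj) (b : B.Obj),
      X.hom x (l b) = ⨆ a, X.hom x (h a) * B.hom (j a) b) :
    (∀ k : B.Obj → X.Obj, IsVFunctor B X k →
      (((1 : V) ≤ ⨅ b, X.hom (l b) (k b)) ↔ ((1 : V) ≤ ⨅ a, X.hom (h a) (k (j a))))) ∧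
    (∀ (X' : VCategory.{u, w} V) (F : X.Obj → X'.Obj), IsVFunctor X X' F →
      ∀ k : B.Obj → X'.Obj, IsVFunctor B X' k →
        (((1 : V) ≤ ⨅ b, X'.hom (F (l b)) (k b)) ↔
          ((1 : V) ≤ ⨅ a, X'.hom (F (h a)) (k (j a))))) := by
  have : IsQuantale V := isQuantale_of_mul_sSup_distrib hV
  exact ⟨fun _ hk ↦ iff_of_eq <| congrArg _ <|
      absolute_left_kan_extension_general hform (F := id) (fun _ _ ↦ le_rfl) hk,
    fun _ _ hF _ hk ↦ iff_of_eq <| congrArg _ <| absolute_left_kan_extension_general hform hF hk⟩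
end
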